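/- Let d ≥ 1, fix x₀ ∈ ℝ^d, let A_1,…,A_d : ℝ^d → ℝ and V : ℝ^d → ℝ be smooth, set B_{kj} = ∂A_j/∂x_k − ∂A_k/∂x_j, and define the Poincaré gauge potential A^{(x₀)}_j(Z) = ∑_{k=1}^d (∫_0^1 B_{kj}(x₀ + τZ) τ dτ) Z_k. Fix a smooth u : ℝ^d → ℂ and Z ∈ ℝ^d, and for h ∈ ℝ set F(h) = −∑_{j=1}^d ((∂/∂Z_j − i A^{(x₀)}_j(h·))² u)(Z) + V(x₀ + hZ) u(Z). Then F is smooth in h and its first derivative at h = 0 is F′(0) = i ∑_{j,k=1}^d B_{kj}(x₀) Z_k (∂u/∂Z_j)(Z) + ( ∑_{j=1}^d (∂V/∂x_j)(x₀) Z_j ) u(Z). -/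

import Mathlib

open scoped BigOperators

/-!
Expanding the squares, the rescaled operator is
`-∑ ∂_j² + i ∑ (h (∂_j A_j)(hZ) + 2 A_j(hZ) ∂_j) + ∑ A_j(hZ)² + V(x₀ + hZ)`,
so `h` enters only through smooth functions restricted to the ray `h ↦ hZ`. The Poincaré gauge
potential vanishes at `0` with linear part `½ ∑_k B_{kj}(x₀) Z_k`; hence at first order the
quadratic term drops out, the divergence term is `½ ∑ B_{jj}(x₀) = 0` and the cross term gives
`∑_k B_{kj}(x₀) Z_k ∂_j`.
-/

section ParametricIntegral

variable {H E : Type*} [NormedAddCommGroup H] [NormedSpace ℝ H]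
  [NormedAddCommGroup E] [NormedSpace ℝ E] {f : H → ℝ → E}

theorem contDiff_uncurry_fderiv_left {n : WithTop ℕ∞}
    (hf : ContDiff ℝ (n + 1) (Function.uncurry f)) :
    ContDiff ℝ n (Function.uncurry fun x t => fderiv ℝ (f · t) x) :=
  ContDiff.fderiv (f := fun (p : H × ℝ) y => f y p.2)
    (hf.comp (contDiff_snd.prodMk (contDiff_snd.comp contDiff_fst))) contDiff_fst le_rfl

variable [FiniteDimensional ℝ H]

theorem hasFDerivAt_intervalIntegral_of_contDiff (hf : ContDiff ℝ 1 (Function.uncurry f))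
    (a b : ℝ) (x : H) :
    HasFDerivAt (fun y => ∫ t in a..b, f y t) (∫ t in a..b, fderiv ℝ (f · t) x) x := by
  have hf' : Continuous (Function.uncurry fun y t => fderiv ℝ (f · t) y) :=
    (contDiff_uncurry_fderiv_left (n := 0) (by simpa only [zero_add] using hf)).continuous
  have hdiff (t : ℝ) : Differentiable ℝ (f · t) :=
    (hf.differentiable one_ne_zero).comp (differentiable_id.prodMk (differentiable_const t))
  obtain ⟨C, hC⟩ := ((isCompact_closedBall x 1).prod (isCompact_uIcc (a := a) (b := b))
    ).exists_bound_of_continuousOn hf'.continuousOn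
  exact intervalIntegral.hasFDerivAt_integral_of_dominated_of_fderiv_le
    (F' := fun y t => fderiv ℝ (f · t) y) (bound := fun _ => C)
    (Metric.closedBall_mem_nhds x one_pos)
    (.of_forall fun y => (hf.continuous.uncurry_left y).aestronglyMeasurable)
    ((hf.continuous.uncurry_left x).intervalIntegrable a b)
    (hf'.uncurry_left x).aestronglyMeasurable
    (.of_forall fun t ht y hy => hC (y, t) ⟨hy, Set.uIoc_subset_uIcc ht⟩)
    intervalIntegrable_const
    (.of_forall fun t _ y _ => (hdiff t y).hasFDerivAt)

theorem contDiff_nat_intervalIntegral [CompleteSpace E] (n : ℕ)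
    (hf : ContDiff ℝ n (Function.uncurry f)) (a b : ℝ) :
    ContDiff ℝ n fun x => ∫ t in a..b, f x t := by
  induction n generalizing f with
  | zero =>
    exact contDiff_zero.2 <|
      intervalIntegral.continuous_parametric_intervalIntegral_of_continuous' hf.continuous a b
  | succ n ih =>
    rw [Nat.cast_add_one] at hf ⊢
    have hf' := contDiff_uncurry_fderiv_left hf
    have hderiv := hasFDerivAt_intervalIntegral_of_contDiff (hf.of_le (by simp)) a b
    have hderiv_apply (x v : H) : fderiv ℝ (fun y => ∫ t in a..b, f y t) x v =
        ∫ t in a..b, fderiv ℝ (f · t) x v := by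
      rw [(hderiv x).fderiv, ContinuousLinearMap.intervalIntegral_apply]
      exact (hf'.continuous.uncurry_left x).intervalIntegrable a b
    rw [contDiff_succ_iff_fderiv_apply]
    refine ⟨fun x => (hderiv x).differentiableAt, by simp, fun v => ?_⟩
    simp only [hderiv_apply]
    exact ih (hf'.clm_apply contDiff_const)

theorem contDiff_intervalIntegral [CompleteSpace E] {n : ℕ∞}
    (hf : ContDiff ℝ n (Function.uncurry f)) (a b : ℝ) :
    ContDiff ℝ n fun x => ∫ t in a..b, f x t :=
  contDiff_iff_forall_nat_le.2 fun m hm =>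
    contDiff_nat_intervalIntegral m (hf.of_le (by exact_mod_cast hm)) a b

theorem contDiff_integral_segment_mul {b : H → ℝ} {n : ℕ∞} (hb : ContDiff ℝ n b) (x₀ : H) :
    ContDiff ℝ n fun Z => ∫ τ in (0 : ℝ)..1, b (x₀ + τ • Z) * τ :=
  contDiff_intervalIntegral (f := fun Z τ => b (x₀ + τ • Z) * τ)
    ((hb.comp (contDiff_const.add (contDiff_snd.smul contDiff_fst))).mul contDiff_snd) 0 1

end ParametricIntegral

section MagneticField

variable {ι : Type*} [DecidableEq ι]

/-- The components `B_{kj} = ∂_k A_j - ∂_j A_k` of the magnetic field, the exterior derivative of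
the potential `A`, in the standard coordinates of `ι → ℝ`. -/
noncomputable def magneticField (A : ι → (ι → ℝ) → ℝ) (k j : ι) (x : ι → ℝ) : ℝ :=
  fderiv ℝ (A j) x (Pi.single k 1) - fderiv ℝ (A k) x (Pi.single j 1)

variable {A : ι → (ι → ℝ) → ℝ}

theorem magneticField_self (j : ι) (x : ι → ℝ) : magneticField A j j x = 0 :=
  sub_self _

theorem contDiff_magneticField [Fintype ι] {n : WithTop ℕ∞}
    (hA : ∀ j, ContDiff ℝ (n + 1) (A j)) (k j : ι) : ContDiff ℝ n (magneticField A k j) :=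
  (((hA j).fderiv_right le_rfl).clm_apply contDiff_const).sub
    (((hA k).fderiv_right le_rfl).clm_apply contDiff_const)

end MagneticField

section PoincareGauge

variable {ι : Type*} [Fintype ι]

/-- The potential of the field `B` in the Poincaré (transverse) gauge centred at `x₀`; its argument
`Z` is the displacement from `x₀`. -/
noncomputable def poincareGauge (B : ι → ι → (ι → ℝ) → ℝ) (x₀ : ι → ℝ) (j : ι) (Z : ι → ℝ) : ℝ :=
  ∑ k, (∫ τ in (0 : ℝ)..1, B k j (x₀ + τ • Z) * τ) * Z k

variable {B : ι → ι → (ι → ℝ) → ℝ} {j : ι}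

theorem contDiff_poincareGauge {n : ℕ∞} (hB : ∀ k, ContDiff ℝ n (B k j)) (x₀ : ι → ℝ) :
    ContDiff ℝ n (poincareGauge B x₀ j) :=
  ContDiff.sum fun k _ => (contDiff_integral_segment_mul (hB k) x₀).mul (contDiff_apply ℝ ℝ k)

theorem poincareGauge_zero (x₀ : ι → ℝ) : poincareGauge B x₀ j 0 = 0 := by
  simp only [poincareGauge, Pi.zero_apply, mul_zero, Finset.sum_const_zero]

theorem fderiv_poincareGauge_zero (hB : ∀ k, ContDiff ℝ 1 (B k j)) (x₀ v : ι → ℝ) :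
    fderiv ℝ (poincareGauge B x₀ j) 0 v = (∑ k, B k j x₀ * v k) / 2 := by
  have hmean (k : ι) : ∫ τ in (0 : ℝ)..1, B k j (x₀ + τ • (0 : ι → ℝ)) * τ = B k j x₀ / 2 := by
    simp only [smul_zero, add_zero]
    rw [intervalIntegral.integral_const_mul, integral_id]
    ring
  have hderiv : HasFDerivAt (poincareGauge B x₀ j) _ 0 :=
    HasFDerivAt.fun_sum fun k _ =>
      ((contDiff_integral_segment_mul (n := 1) (hB k) x₀).differentiable one_ne_zero
        0).hasFDerivAt.fun_mul (hasFDerivAt_apply k 0)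
  simp only [hderiv.fderiv, hmean, sum_apply, add_apply, smul_apply, smul_eq_mul,
    ContinuousLinearMap.proj_apply, Pi.zero_apply, zero_mul, add_zero, Finset.sum_div,
    div_mul_eq_mul_div]

theorem fderiv_poincareGauge_zero_single [DecidableEq ι] (hB : ∀ k, ContDiff ℝ 1 (B k j))
    (x₀ : ι → ℝ) (i : ι) :
    fderiv ℝ (poincareGauge B x₀ j) 0 (Pi.single i 1) = B i j x₀ / 2 := by
  simp [fderiv_poincareGauge_zero hB, Pi.single_apply]

end PoincareGauge

section Schrodinger

variable {ι E F : Type*} [NormedAddCommGroup E] [NormedSpace ℝ E]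
  [NormedAddCommGroup F] [NormedSpace ℂ F]

/-- The magnetic (covariant) derivative `∂_v - i a` in the direction `v`, where `a` is the component
of the potential along `v`; it acts on sections with values in a complex normed space. -/
noncomputable def magneticDeriv (a : E → ℝ) (v : E) (s : E → F) (Z : E) : F :=
  fderiv ℝ s Z v - Complex.I • a Z • s Z

theorem magneticDeriv_magneticDeriv {a : E → ℝ} {v : E} {s : E → F} {Z : E}
    (ha : DifferentiableAt ℝ a Z) (hs : ContDiffAt ℝ 2 s Z) :
    magneticDeriv a v (magneticDeriv a v s) Z =
      fderiv ℝ (fun Y => fderiv ℝ s Y v) Z v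
        - Complex.I • (fderiv ℝ a Z v • s Z + (2 * a Z) • fderiv ℝ s Z v)
        - a Z ^ 2 • s Z := by
  have hs₁ : HasFDerivAt s (fderiv ℝ s Z) Z := (hs.differentiableAt two_ne_zero).hasFDerivAt
  have hs₂ : DifferentiableAt ℝ (fun Y => fderiv ℝ s Y v) Z :=
    ((hs.fderiv_right (m := 1) (by norm_num)).differentiableAt one_ne_zero).clm_apply
      (differentiableAt_const v)
  have hderiv : HasFDerivAt (magneticDeriv a v s) _ Z :=
    hs₂.hasFDerivAt.sub ((ha.hasFDerivAt.smul hs₁).const_smul Complex.I)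
  have hI : Complex.I • a Z • Complex.I • a Z • s Z = -(a Z ^ 2 • s Z) := by
    rw [smul_comm (a Z) Complex.I, smul_smul, smul_smul, Complex.I_mul_I, neg_one_smul, sq]
  simp only [magneticDeriv] at hderiv ⊢
  rw [hderiv.fderiv]
  simp only [sub_apply, smul_apply, add_apply, ContinuousLinearMap.smulRight_apply, smul_sub,
    smul_add, two_mul, add_smul, hI]
  abel

variable [Fintype ι]

/-- The magnetic Schrödinger operator `-∑ (∂_{e j} - i a_j)² + W` for a finite family of directions
`e`, with `a j` the component of the potential along `e j` and `W` the electric potential. -/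
noncomputable def magneticSchrodinger (e : ι → E) (a : ι → E → ℝ) (W : E → ℝ) (s : E → F)
    (Z : E) : F :=
  -(∑ j, magneticDeriv (a j) (e j) (magneticDeriv (a j) (e j) s) Z) + W Z • s Z

variable {e : ι → E} {a : ι → E → ℝ} {W : E → ℝ} {s : E → F} {Z : E}

theorem magneticSchrodinger_eq (ha : ∀ j, DifferentiableAt ℝ (a j) Z) (hs : ContDiffAt ℝ 2 s Z) :
    magneticSchrodinger e a W s Z =
      -(∑ j, fderiv ℝ (fun Y => fderiv ℝ s Y (e j)) Z (e j))
        + Complex.I • ∑ j, (fderiv ℝ (a j) Z (e j) • s Z + (2 * a j Z) • fderiv ℝ s Z (e j))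
        + (∑ j, a j Z ^ 2 + W Z) • s Z := by
  simp only [magneticSchrodinger, magneticDeriv_magneticDeriv (ha _) hs, Finset.sum_sub_distrib,
    Finset.smul_sum, add_smul, Finset.sum_smul]
  abel

/-- The rescaled magnetic Schrödinger operator `𝓗_h`: the potentials are evaluated at `h • Z` and
the derivatives in `Z` carry no power of `h`. Both potentials are functions of the displacement from
the centre `x₀`. -/
noncomputable def rescaledSchrodinger (e : ι → E) (a : ι → E → ℝ) (W : E → ℝ) (h : ℝ) :
    (E → F) → E → F :=
  magneticSchrodinger e (fun j Y => a j (h • Y)) (fun Y => W (h • Y))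

theorem rescaledSchrodinger_eq (ha : ∀ j, Differentiable ℝ (a j)) (hs : ContDiffAt ℝ 2 s Z)
    (h : ℝ) :
    rescaledSchrodinger e a W h s Z =
      -(∑ j, fderiv ℝ (fun Y => fderiv ℝ s Y (e j)) Z (e j))
        + Complex.I • ∑ j, ((h * fderiv ℝ (a j) (h • Z) (e j)) • s Z
          + (2 * a j (h • Z)) • fderiv ℝ s Z (e j))
        + (∑ j, a j (h • Z) ^ 2 + W (h • Z)) • s Z := by
  have hdiff (j : ι) : DifferentiableAt ℝ (fun Y => a j (h • Y)) Z :=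
    (ha j (h • Z)).comp Z (differentiableAt_id.const_smul h)
  rw [rescaledSchrodinger, magneticSchrodinger_eq hdiff hs]
  simp only [fderiv_comp_smul, smul_apply, smul_eq_mul]

theorem contDiff_rescaledSchrodinger {n : WithTop ℕ∞} (ha : ∀ j, ContDiff ℝ (n + 1) (a j))
    (hW : ContDiff ℝ n W) (hs : ContDiffAt ℝ 2 s Z) :
    ContDiff ℝ n fun h => rescaledSchrodinger e a W h s Z := by
  have hray : ContDiff ℝ n fun h : ℝ => h • Z := contDiff_id.smul contDiff_const
  have ha₀ (j : ι) : ContDiff ℝ n fun h : ℝ => a j (h • Z) :=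
    ((ha j).of_le le_self_add).comp hray
  have ha₁ (j : ι) : ContDiff ℝ n fun h : ℝ => fderiv ℝ (a j) (h • Z) (e j) :=
    (((ha j).fderiv_right le_rfl).comp hray).clm_apply contDiff_const
  have hW₀ : ContDiff ℝ n fun h : ℝ => W (h • Z) := hW.comp hray
  have hfirst : ContDiff ℝ n fun h : ℝ => ∑ j, ((h * fderiv ℝ (a j) (h • Z) (e j)) • s Z
      + (2 * a j (h • Z)) • fderiv ℝ s Z (e j)) :=
    ContDiff.sum fun j _ => ((contDiff_id.mul (ha₁ j)).smul contDiff_const).add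
      ((contDiff_const.mul (ha₀ j)).smul contDiff_const)
  have hzeroth : ContDiff ℝ n fun h : ℝ => (∑ j, a j (h • Z) ^ 2 + W (h • Z)) • s Z :=
    ((ContDiff.sum fun j _ => (ha₀ j).pow 2).add hW₀).smul contDiff_const
  simp only [rescaledSchrodinger_eq (fun j => (ha j).differentiable (by simp)) hs]
  exact (contDiff_const.add (hfirst.const_smul Complex.I)).add hzeroth

theorem hasDerivAt_rescaledSchrodinger_zero (ha : ∀ j, ContDiff ℝ 2 (a j))
    (ha_zero : ∀ j, a j 0 = 0) (hW : DifferentiableAt ℝ W 0) (hs : ContDiffAt ℝ 2 s Z) :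
    HasDerivAt (fun h => rescaledSchrodinger e a W h s Z)
      (Complex.I • ∑ j, (fderiv ℝ (a j) 0 (e j) • s Z
        + (2 * fderiv ℝ (a j) 0 Z) • fderiv ℝ s Z (e j)) + fderiv ℝ W 0 Z • s Z) 0 := by
  have hdiff (j : ι) : Differentiable ℝ (a j) := (ha j).differentiable two_ne_zero
  have hray : HasDerivAt (fun h : ℝ => h • Z) Z 0 := by
    simpa only [id, one_smul] using (hasDerivAt_id (0 : ℝ)).smul_const Z
  have along_ray {g : E → ℝ} (hg : DifferentiableAt ℝ g 0) :
      HasDerivAt (fun h : ℝ => g (h • Z)) (fderiv ℝ g 0 Z) 0 :=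
    hg.hasFDerivAt.comp_hasDerivAt_of_eq 0 hray (zero_smul ℝ Z).symm
  have hdiv (j : ι) :
      HasDerivAt (fun h : ℝ => h * fderiv ℝ (a j) (h • Z) (e j)) (fderiv ℝ (a j) 0 (e j)) 0 := by
    have hD : DifferentiableAt ℝ (fun Y => fderiv ℝ (a j) Y (e j)) 0 :=
      (((ha j).fderiv_right (m := 1) (by norm_num)).differentiable one_ne_zero 0).clm_apply
        (differentiableAt_const _)
    simpa using (hasDerivAt_id' (0 : ℝ)).fun_mul (along_ray hD)
  have hsq (j : ι) : HasDerivAt (fun h : ℝ => a j (h • Z) ^ 2) 0 0 := by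
    simpa [ha_zero] using (along_ray (hdiff j 0)).fun_pow 2
  have hfirst := (HasDerivAt.fun_sum (u := Finset.univ) fun j _ =>
    ((hdiv j).smul_const (s Z)).fun_add
      (((along_ray (hdiff j 0)).const_mul 2).smul_const (fderiv ℝ s Z (e j)))).fun_const_smul
        Complex.I
  have hzeroth := ((HasDerivAt.fun_sum (u := Finset.univ) fun j _ => hsq j).fun_add
    (along_ray hW)).smul_const (s Z)
  simp only [rescaledSchrodinger_eq hdiff hs]
  simpa only [Finset.sum_const_zero, zero_add] using (hfirst.const_add _).fun_add hzeroth

end Schrodinger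

theorem linearMap_apply_eq_sum_single {R ι : Type*} [CommSemiring R] [Fintype ι] [DecidableEq ι]
    (L : (ι → R) →ₗ[R] R) (v : ι → R) : L v = ∑ j, L (Pi.single j 1) * v j := by
  conv_lhs => rw [pi_eq_sum_univ' v, map_sum]
  simp only [map_smul, smul_eq_mul, mul_comm]

theorem rescaled_operator_first_order_coefficient_general {ι F : Type*} [Fintype ι]
    [DecidableEq ι] [NormedAddCommGroup F] [NormedSpace ℂ F] {n : ℕ∞} (hn : n ≠ 0) (x₀ : ι → ℝ)
    {B : ι → ι → (ι → ℝ) → ℝ} (hB : ∀ k j, ContDiff ℝ (n + 1) (B k j)) (hB_diag : ∀ j, B j j x₀ = 0)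
    {V : (ι → ℝ) → ℝ} (hV : ContDiff ℝ n V) {u : (ι → ℝ) → F} {Z : ι → ℝ}
    (hu : ContDiffAt ℝ 2 u Z) :
    ContDiff ℝ n (fun h => rescaledSchrodinger (fun j => Pi.single j 1) (poincareGauge B x₀)
        (fun Y => V (x₀ + Y)) h u Z) ∧
      HasDerivAt (fun h => rescaledSchrodinger (fun j => Pi.single j 1) (poincareGauge B x₀)
          (fun Y => V (x₀ + Y)) h u Z)
        (Complex.I • (∑ j, ∑ k, (B k j x₀ * Z k) • fderiv ℝ u Z (Pi.single j 1))
          + (∑ j, fderiv ℝ V x₀ (Pi.single j 1) * Z j) • u Z) 0 := by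
  have hn_one : (1 : WithTop ℕ∞) ≤ n := by exact_mod_cast Order.one_le_iff_ne_zero.2 hn
  have hA (j : ι) : ContDiff ℝ (n + 1) (poincareGauge B x₀ j) :=
    contDiff_poincareGauge (n := n + 1) (hB · j) x₀
  have hW : ContDiff ℝ n fun Y => V (x₀ + Y) := hV.comp (contDiff_const.add contDiff_id)
  refine ⟨contDiff_rescaledSchrodinger hA hW hu, ?_⟩
  have hB_one (k j : ι) : ContDiff ℝ 1 (B k j) := (hB k j).of_le (hn_one.trans le_self_add)
  have hVZ : fderiv ℝ (fun Y => V (x₀ + Y)) 0 Z = ∑ j, fderiv ℝ V x₀ (Pi.single j 1) * Z j := by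
    rw [fderiv_comp_add_left, add_zero]
    exact linearMap_apply_eq_sum_single (fderiv ℝ V x₀).toLinearMap Z
  have hderiv := hasDerivAt_rescaledSchrodinger_zero (e := fun j : ι => Pi.single j (1 : ℝ))
    (fun j => (hA j).of_le (by simpa [one_add_one_eq_two] using add_le_add_left hn_one 1))
    (fun j => poincareGauge_zero x₀) (hW.differentiable (zero_lt_one.trans_le hn_one).ne' 0) hu
  simpa only [fderiv_poincareGauge_zero_single (hB_one · _), hB_diag, zero_div, zero_smul, zero_add,
    fderiv_poincareGauge_zero (hB_one · _), mul_div_cancel₀ _ (two_ne_zero' ℝ), Finset.sum_smul,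
    hVZ] using hderiv

/-- The first-order coefficient `𝓗^{(1)}` in the expansion of the rescaled magnetic
Schrödinger operator in the Poincaré gauge:
`F'(0) = i ∑_{j,k} B_{kj}(x₀) Z_k ∂u/∂Z_j(Z) + (∑_j (∂V/∂x_j)(x₀) Z_j) u(Z)`. -/
theorem rescaled_operator_first_order_coefficient
    (d : ℕ) (hd : 1 ≤ d) (x₀ : Fin d → ℝ)
    (A : Fin d → (Fin d → ℝ) → ℝ) (hA : ∀ j, ContDiff ℝ (⊤ : ℕ∞) (A j))
    (V : (Fin d → ℝ) → ℝ) (hV : ContDiff ℝ (⊤ : ℕ∞) V)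
    (B : Fin d → Fin d → (Fin d → ℝ) → ℝ)
    (hB : ∀ k j x, B k j x =
      fderiv ℝ (A j) x (Pi.single k 1) - fderiv ℝ (A k) x (Pi.single j 1))
    (A' : Fin d → (Fin d → ℝ) → ℝ)
    (hA' : ∀ j Z, A' j Z = ∑ k, (∫ τ in (0:ℝ)..1, B k j (x₀ + τ • Z) * τ) * Z k)
    (P : ℝ → Fin d → ((Fin d → ℝ) → ℂ) → ((Fin d → ℝ) → ℂ))
    (hP : ∀ h j s Z, P h j s Z
      = fderiv ℝ s Z (Pi.single j 1) - Complex.I * (A' j (h • Z) : ℂ) * s Z)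
    (u : (Fin d → ℝ) → ℂ) (hu : ContDiff ℝ (⊤ : ℕ∞) u)
    (Z : Fin d → ℝ)
    (F : ℝ → ℂ)
    (hF : ∀ h : ℝ, F h
      = -(∑ j, P h j (P h j u) Z) + (V (x₀ + h • Z) : ℂ) * u Z) :
    ContDiff ℝ (⊤ : ℕ∞) F ∧
    deriv F 0
      = Complex.I * (∑ j, ∑ k, ((B k j x₀ * Z k : ℝ) : ℂ) * fderiv ℝ u Z (Pi.single j 1))
        + (((∑ j, fderiv ℝ V x₀ (Pi.single j 1) * Z j : ℝ)) : ℂ) * u Z := by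
  obtain rfl : B = magneticField A := by ext; exact hB ..
  obtain rfl : A' = poincareGauge (magneticField A) x₀ := funext₂ hA'
  have hP_eq (h j) : P h j =
      magneticDeriv (fun W => poincareGauge (magneticField A) x₀ j (h • W)) (Pi.single j 1) := by
    ext s Z
    simp only [hP, magneticDeriv, smul_eq_mul, Complex.real_smul, mul_assoc]
  have hF_eq : F = fun h => rescaledSchrodinger (fun j => Pi.single j 1)
      (poincareGauge (magneticField A) x₀) (fun Y => V (x₀ + Y)) h u Z := by
    ext h
    simp only [hF, hP_eq, rescaledSchrodinger, magneticSchrodinger, Complex.real_smul]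
  obtain ⟨hsmooth, hderiv⟩ := rescaled_operator_first_order_coefficient_general ENat.top_ne_zero x₀
    (contDiff_magneticField hA) (magneticField_self · x₀) hV (contDiff_infty.1 hu 2).contDiffAt
  subst hF_eq
  simpa only [smul_eq_mul, Complex.real_smul] using And.intro hsmooth hderiv.deriv
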